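/- For every integer n ≥ 1, ∑_{π ∈ S_n^e} t^{exc(π)} - ∑_{π ∈ S_n^o} t^{exc(π)} = (1-t)^{n-1}, where S_n^e and S_n^o are the sets of even and odd permutations of [n], respectively. -/

import Mathlib

/-!
In the Leibniz expansion of the determinant of the matrix with entries `x i` strictly below the
diagonal and `1` elsewhere, the term of `π` is its sign times the product of `x` over the
excedance values of `π`. Subtracting from each column its predecessor makes the matrix lower
triangular, with diagonal entries `1` and `1 - x i` for `i ≠ 0`.
-/

open Finset MvPolynomial

/-- Number of inversions of a permutation of `Fin n`
(pairs `p.1 < p.2` with `π p.1 > π p.2`). -/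
def inversions {n : ℕ} (π : Equiv.Perm (Fin n)) : ℕ :=
  (Finset.univ.filter fun p : Fin n × Fin n => p.1 < p.2 ∧ π p.2 < π p.1).card

/-- Excedance indices of a permutation. -/
def EXCi {n : ℕ} (π : Equiv.Perm (Fin n)) : Finset (Fin n) :=
  Finset.univ.filter fun i => i < π i

/-- Excedance values of a permutation. -/
def EXCv {n : ℕ} (π : Equiv.Perm (Fin n)) : Finset (Fin n) :=
  (EXCi π).image π

/-- Right-to-left minima indices of a permutation. -/
def RLMi {n : ℕ} (π : Equiv.Perm (Fin n)) : Finset (Fin n) :=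
  Finset.univ.filter fun i => ∀ j, i < j → π i < π j

/-- Right-to-left minima values of a permutation. -/
def RLMv {n : ℕ} (π : Equiv.Perm (Fin n)) : Finset (Fin n) :=
  (RLMi π).image π

/-- The derangements of `Fin n`, i.e. permutations with no fixed point. -/
def derangementsF (n : ℕ) : Finset (Equiv.Perm (Fin n)) :=
  Finset.univ.filter fun π => ∀ i, π i ≠ i

theorem sum_even_sub_sum_not_even {ι R : Type*} [Ring R] (s : Finset ι) (k : ι → ℕ) (f : ι → R) :
    (∑ i ∈ s with Even (k i), f i) - ∑ i ∈ s with ¬ Even (k i), f i =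
      ∑ i ∈ s, (-1) ^ k i * f i := by
  rw [sum_filter, sum_filter, ← sum_sub_distrib]
  refine sum_congr rfl fun i _ => ?_
  rcases Nat.even_or_odd (k i) with h | h
  · simp [h]
  · simp [Nat.not_even_iff_odd.mpr h, h.neg_one_pow]

theorem sign_eq_neg_one_pow_inversions {n : ℕ} (π : Equiv.Perm (Fin n)) :
    Equiv.Perm.sign π = (-1) ^ inversions π := by
  have sign_factor (i j : Fin n) (hij : i < j) :
      (if π i < π j then 1 else -1 : ℤˣ) = if π j < π i then -1 else 1 := by
    rcases (π.injective.ne hij.ne).lt_or_gt with h | h <;> simp [h, h.not_gt]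
  calc Equiv.Perm.sign π
      = ∏ i, ∏ j ∈ Ioi i, if π j < π i then -1 else 1 := by
        rw [Equiv.Perm.sign_eq_prod_prod_Ioi]
        exact prod_congr rfl fun i _ => prod_congr rfl fun j hj => sign_factor i j (mem_Ioi.mp hj)
    _ = ∏ p : Fin n × Fin n, if p.1 < p.2 ∧ π p.2 < π p.1 then -1 else 1 := by
        simp_rw [Fintype.prod_prod_type, ite_and, ← filter_lt_eq_Ioi, prod_filter]
    _ = (-1) ^ inversions π := by
        rw [← prod_filter, prod_const, inversions]

theorem prod_EXCv {n : ℕ} {M : Type*} [CommMonoid M] (π : Equiv.Perm (Fin n)) (f : Fin n → M) :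
    ∏ v ∈ EXCv π, f v = ∏ i ∈ EXCi π, f (π i) :=
  prod_image π.injective.injOn

theorem card_EXCv {n : ℕ} (π : Equiv.Perm (Fin n)) : #(EXCv π) = #(EXCi π) :=
  card_image_of_injective _ π.injective

theorem det_of_ite_lt {R : Type*} [CommRing R] {n : ℕ} (a b : Fin (n + 1) → R) :
    (Matrix.of fun i j => if j < i then a i else b i).det =
      b 0 * ∏ i : Fin n, (b i.succ - a i.succ) := by
  let L : Matrix (Fin (n + 1)) (Fin (n + 1)) R := Matrix.of fun i =>
    Fin.cons (if 0 < i then a i else b i) fun j : Fin n =>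
      if i = j.succ then b i - a i else 0
  have det_eq : (Matrix.of fun i j => if j < i then a i else b i).det = L.det := by
    refine Matrix.det_eq_of_forall_col_eq_smul_add_pred (fun _ => 1) (fun i => by simp [L])
      fun i j => ?_
    simp only [L, Matrix.of_apply, Fin.cons_succ, Fin.lt_def, Fin.ext_iff, Fin.val_succ,
      Fin.val_castSucc, one_mul]
    split_ifs <;> first | omega | ring
  have L_lower : L.IsLowerTriangular := by
    intro i j hij
    obtain ⟨k, rfl⟩ := Fin.exists_succ_eq.mpr (Fin.ne_zero_of_lt hij)
    exact if_neg (OrderDual.toDual_lt_toDual.mp hij).ne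
  rw [det_eq, Matrix.det_of_isLowerTriangular L L_lower, Fin.prod_univ_succ]
  simp [L]

theorem sum_neg_one_pow_inversions_mul_prod_EXCv {R : Type*} [CommRing R] {n : ℕ} (x : Fin n → R) :
    ∑ π : Equiv.Perm (Fin n), (-1) ^ inversions π * ∏ v ∈ EXCv π, x v =
      (Matrix.of fun i j => if j < i then x i else 1).det := by
  rw [Matrix.det_apply']
  refine sum_congr rfl fun π _ => ?_
  have sign_cast : ((Equiv.Perm.sign π : ℤ) : R) = (-1) ^ inversions π := by
    simp [sign_eq_neg_one_pow_inversions]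
  have prod_entries : ∏ v ∈ EXCv π, x v = ∏ i, if i < π i then x (π i) else 1 := by
    rw [prod_EXCv, EXCi, prod_filter]
  rw [sign_cast, prod_entries]
  rfl

theorem stmt8_general {R : Type*} [CommRing R] {n : ℕ} (x : Fin (n + 1) → R) :
    (∑ π : Equiv.Perm (Fin (n + 1)) with Even (inversions π), ∏ v ∈ EXCv π, x v)
      - (∑ π : Equiv.Perm (Fin (n + 1)) with ¬ Even (inversions π), ∏ v ∈ EXCv π, x v)
    = ∏ i : Fin n, (1 - x i.succ) := by
  rw [sum_even_sub_sum_not_even, sum_neg_one_pow_inversions_mul_prod_EXCv, det_of_ite_lt,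
    one_mul]

theorem stmt8 (n : ℕ) (hn : 1 ≤ n) :
    (∑ π ∈ Finset.univ.filter (fun π : Equiv.Perm (Fin n) => Even (inversions π)),
        (Polynomial.X : Polynomial ℤ) ^ (EXCi π).card)
      - (∑ π ∈ Finset.univ.filter (fun π : Equiv.Perm (Fin n) => ¬ Even (inversions π)),
          (Polynomial.X : Polynomial ℤ) ^ (EXCi π).card)
    = (1 - Polynomial.X) ^ (n - 1) := by
  obtain ⟨m, rfl⟩ := Nat.exists_eq_add_of_le' hn
  simpa [card_EXCv] using stmt8_general fun _ : Fin (m + 1) => (Polynomial.X : Polynomial ℤ)
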